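/- Let ν be an ergodic σ-invariant Borel probability measure on Σ with λ(ν) < 0, and let μ be the unique Borel probability measure invariant for (T₀,T₁,ν). Then there is a unique τ-invariant Borel probability measure κ on Σ × ℝ̄₊ with marginal ν on Σ and marginal μ on ℝ̄₊, and for ν-almost every ω̄ ∈ Σ and every x ∈ ℝ₊, the empirical measures κ_n = (1/n)·Σ_{k=0}^{n−1} δ_{τ^k(ω̄,x)} converge to κ in the weak-* topology (i.e., ∫ φ dκ_n → ∫ φ dκ for every continuous φ : Σ × ℝ̄₊ → ℝ). -/

import Mathlib

/-!
The two fibre maps are affine with slopes `a` and `b`, so along an itinerary `ω` two finite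
starting points stay within (product of the slopes along `ω`) × (a constant) of each other.
Birkhoff's theorem for the logarithm of the slope and `λ(ν) < 0` make this product tend to `0` for
`ν`-almost every `ω` (`ae_tendsto_slopeProd`). By compactness of `Σ × [0,∞]`, the values of a
continuous `φ` along the orbits of `(ω, x)` and `(ω, y)` then become asymptotically equal, so the
limiting behaviour of the Birkhoff averages of `φ` does not depend on the finite point `x`
(`tendsto_birkhoffAverage_sub`).

The heart of the argument is `ae_eventually_lt`. Let `κ` be invariant with marginal `ν` and without
mass at `∞`. That the upper limit of the averages at `(ω, 0)` is at least `q` is, up to null sets, a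
`σ`-invariant property of `ω`; by ergodicity of `ν` it holds almost surely or almost never. If it
held almost surely, the averages would exceed any `r < q` at some time from `κ`-almost every point,
and the maximal ergodic theorem (`integral_nonneg_of_birkhoffSum_pos`) would give `∫ φ ∂κ ≥ q`.
Hence the upper limit is at most `∫ φ ∂κ`, and applying this to `-φ` gives convergence. Neither
ergodicity of `κ` nor the pointwise ergodic theorem for general systems is needed. Separability of
`C(Σ × [0,∞], ℝ)` makes the exceptional set independent of `φ`, and since the limits `∫ φ ∂κ` are
read off from the dynamics alone, `κ` is unique.
-/

open MeasureTheory Filter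
open scoped ENNReal

/-- The generators `T₀(x) = a·x`, `T₁(x) = b·x + 1`, extended to the one-point
compactification `ℝ̄₊ = [0,∞]` (modelled by `ℝ≥0∞`) by `T₀(∞) = T₁(∞) = ∞`. -/
noncomputable def Tmap (a b : ℝ) (i : Bool) (x : ℝ≥0∞) : ℝ≥0∞ :=
  if i then ENNReal.ofReal b * x + 1 else ENNReal.ofReal a * x

/-- The one-sided full shift `σ` on `Σ = {0,1}^{ℕ₀}`. -/
def shiftMap (ω : ℕ → Bool) : ℕ → Bool := fun i => ω (i + 1)

/-- The skew product `τ(ω̄, x) = (σ(ω̄), T_{ω̄₀}(x))` on `X = Σ × ℝ̄₊`. -/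
noncomputable def skewMap (a b : ℝ) (z : (ℕ → Bool) × ℝ≥0∞) : (ℕ → Bool) × ℝ≥0∞ :=
  (shiftMap z.1, Tmap a b (z.1 0) z.2)

/-- A Borel probability measure `μ` on `ℝ̄₊` with `μ({∞}) = 0` is *invariant for*
`(T₀, T₁, ν)` if there is a `τ`-invariant Borel probability measure `κ` on `Σ × ℝ̄₊`
whose marginal on `Σ` is `ν` and whose marginal on `ℝ̄₊` is `μ`. -/
def IsInvariantFor (a b : ℝ) (ν : Measure (ℕ → Bool)) (μ : Measure ℝ≥0∞) : Prop :=
  IsProbabilityMeasure μ ∧ μ {⊤} = 0 ∧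
    ∃ κ : Measure ((ℕ → Bool) × ℝ≥0∞), IsProbabilityMeasure κ ∧
      MeasurePreserving (skewMap a b) κ κ ∧
      κ.map Prod.fst = ν ∧ κ.map Prod.snd = μ

/-- The Lyapunov exponent `λ(ν) = ν(C₀)·ln a + ν(C₁)·ln b` of a shift-invariant
measure `ν` on `Σ`, where `Cᵢ = {ω̄ : ω̄₀ = i}`. -/
noncomputable def lyap (a b : ℝ) (ν : Measure (ℕ → Bool)) : ℝ :=
  (ν {ω | ω 0 = false}).toReal * Real.log a + (ν {ω | ω 0 = true}).toReal * Real.log b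

open Topology

/-! ### The maximal ergodic theorem -/

/-- The running maximum `max (0, S₁f, …, S_N f)` of the Birkhoff sums, encoded by the recursion
`M_{N+1} = max (0, f + M_N ∘ T)`. -/
noncomputable def maxSum {X : Type*} (T : X → X) (f : X → ℝ) : ℕ → X → ℝ
  | 0 => fun _ => 0
  | N + 1 => fun x => max 0 (f x + maxSum T f N (T x))

section Maximal

variable {X : Type*} (T : X → X) (f : X → ℝ)

lemma maxSum_nonneg (N : ℕ) (x : X) : 0 ≤ maxSum T f N x := by
  cases N with
  | zero => exact le_rfl
  | succ N => exact le_max_left _ _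

lemma maxSum_le_succ (N : ℕ) (x : X) : maxSum T f N x ≤ maxSum T f (N + 1) x := by
  induction N generalizing x with
  | zero => exact maxSum_nonneg T f 1 x
  | succ N ih => exact max_le_max le_rfl (add_le_add le_rfl (ih (T x)))

lemma birkhoffSum_le_maxSum (N : ℕ) (x : X) : birkhoffSum T f N x ≤ maxSum T f N x := by
  induction N generalizing x with
  | zero => simp [maxSum]
  | succ N ih =>
    rw [birkhoffSum_succ']
    exact (add_le_add le_rfl (ih (T x))).trans (le_max_right _ _)

/-- The pointwise inequality behind the maximal ergodic theorem: where the running maximum is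
positive, it is attained by a sum starting with the term `f x`. -/
lemma maxSum_sub_le (N : ℕ) (x : X) :
    maxSum T f N x - maxSum T f N (T x) ≤ {y | 0 < maxSum T f N y}.indicator f x := by
  by_cases hx : 0 < maxSum T f N x
  · rw [Set.indicator_of_mem (by exact hx)]
    cases N with
    | zero => simp [maxSum] at hx
    | succ N =>
      have h1 : maxSum T f (N + 1) x = f x + maxSum T f N (T x) := by
        change max _ _ = _
        refine max_eq_right (le_of_lt ?_)
        by_contra h
        exact absurd hx (not_lt.2 (max_le le_rfl (not_lt.1 h)))
      have h2 := maxSum_le_succ T f N (T x)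
      linarith
  · rw [Set.indicator_of_notMem (by exact hx)]
    have := maxSum_nonneg T f N (T x)
    linarith [not_lt.1 hx]

lemma measurable_maxSum [MeasurableSpace X] {T : X → X} {f : X → ℝ} (hT : Measurable T)
    (hf : Measurable f) (N : ℕ) : Measurable (maxSum T f N) := by
  induction N with
  | zero => exact measurable_const
  | succ N ih => exact measurable_const.max (hf.add (ih.comp hT))

lemma integrable_maxSum [MeasurableSpace X] {T : X → X} {f : X → ℝ} {m : Measure X}
    (hT : MeasurePreserving T m m) (hf : Integrable f m) (N : ℕ) :
    Integrable (maxSum T f N) m := by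
  induction N with
  | zero => exact integrable_zero _ _ _
  | succ N ih =>
    exact (integrable_zero _ _ _).sup (hf.add (hT.integrable_comp_of_integrable ih))

/-- A form of the maximal ergodic theorem: the set where some Birkhoff sum is positive is assumed
to have full measure. -/
theorem integral_nonneg_of_birkhoffSum_pos [MeasurableSpace X] {T : X → X} {f : X → ℝ}
    {m : Measure X} (hT : MeasurePreserving T m m) (hfm : Measurable f) (hf : Integrable f m)
    (hpos : ∀ᵐ x ∂m, ∃ n, 0 < birkhoffSum T f n x) : 0 ≤ ∫ x, f x ∂m := by
  have hset : ∀ N, MeasurableSet {y | 0 < maxSum T f N y} := fun N =>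
    measurableSet_lt measurable_const (measurable_maxSum hT.measurable hfm N)
  have hlim : Tendsto (fun N => ∫ x, {y | 0 < maxSum T f N y}.indicator f x ∂m) atTop
      (𝓝 (∫ x, f x ∂m)) := by
    refine tendsto_integral_of_dominated_convergence (fun x => ‖f x‖)
      (fun N => (hf.indicator (hset N)).aestronglyMeasurable) hf.norm
      (fun N => ae_of_all _ fun x => norm_indicator_le_norm_self f x) ?_
    filter_upwards [hpos] with x ⟨n, hn⟩
    refine tendsto_const_nhds.congr' ?_
    filter_upwards [eventually_ge_atTop n] with N hN
    have hmono : Monotone fun N => maxSum T f N x :=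
      monotone_nat_of_le_succ fun N => maxSum_le_succ T f N x
    have : 0 < maxSum T f N x :=
      (hn.trans_le (birkhoffSum_le_maxSum T f n x)).trans_le (hmono hN)
    rw [Set.indicator_of_mem (by exact this)]
  refine ge_of_tendsto' hlim fun N => ?_
  have hM := integrable_maxSum hT hf N
  have hMT : Integrable (fun x => maxSum T f N (T x)) m := hT.integrable_comp_of_integrable hM
  calc (0 : ℝ) = ∫ x, maxSum T f N x - maxSum T f N (T x) ∂m := by
        have h := integral_map (f := maxSum T f N) hT.measurable.aemeasurable
          (by rw [hT.map_eq]; exact hM.aestronglyMeasurable)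
        rw [hT.map_eq] at h
        rw [integral_sub hM hMT, ← h, sub_self]
    _ ≤ _ := integral_mono (hM.sub hMT) (hf.indicator (hset N)) (maxSum_sub_le T f N)

end Maximal

/-! ### Birkhoff averages over an ergodic base -/

/-- A way of saying `q ≤ limsup u` which involves countably many conditions and makes sense
without boundedness assumptions. -/
def LimsupGE (q : ℝ) (u : ℕ → ℝ) : Prop :=
  ∀ r : ℚ, (r : ℝ) < q → ∃ᶠ n in atTop, (r : ℝ) < u n

lemma LimsupGE.of_tendsto_sub {q : ℝ} {u v : ℕ → ℝ} (hu : LimsupGE q u)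
    (h : Tendsto (fun n => u n - v n) atTop (𝓝 0)) : LimsupGE q v := by
  intro r hr
  obtain ⟨s, hrs, hsq⟩ := exists_rat_btwn hr
  have hev := h.eventually_lt_const (sub_pos.2 hrs)
  exact ((hu s hsq).and_eventually hev).mono fun n hn => by linarith [hn.1, hn.2]

lemma measurableSet_limsupGE {X : Type*} [MeasurableSpace X] (q : ℝ) {u : ℕ → X → ℝ}
    (hu : ∀ n, Measurable (u n)) : MeasurableSet {x | LimsupGE q fun n => u n x} := by
  simp only [LimsupGE, frequently_atTop, Set.ofPred_forall, Set.ofPred_exists]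
  refine .iInter fun r => .iInter fun _ => .iInter fun N => .iUnion fun n => ?_
  rw [Set.ofPred_and]
  exact (MeasurableSet.const _).inter (measurableSet_lt measurable_const (hu n))

lemma measurable_birkhoffAverage {X : Type*} [MeasurableSpace X] {T : X → X} {f : X → ℝ}
    (hT : Measurable T) (hf : Measurable f) (n : ℕ) : Measurable (birkhoffAverage ℝ T f n) := by
  unfold birkhoffAverage birkhoffSum
  have h : Measurable fun x => ∑ k ∈ Finset.range n, f (T^[k] x) :=
    Finset.measurable_sum _ fun k _ => hf.comp (hT.iterate k)
  exact h.const_smul ((n : ℝ)⁻¹)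

lemma Tmap_ne_top (a b : ℝ) (i : Bool) {x : ℝ≥0∞} (hx : x ≠ ⊤) : Tmap a b i x ≠ ⊤ := by
  unfold Tmap
  split_ifs
  · exact ENNReal.add_ne_top.2 ⟨ENNReal.mul_ne_top ENNReal.ofReal_ne_top hx, ENNReal.one_ne_top⟩
  · exact ENNReal.mul_ne_top ENNReal.ofReal_ne_top hx

/-- The averages of `φ` along two orbits over `ω` starting at finite heights are asymptotically
equal. -/
def FibreIndep (a b : ℝ) (φ : (ℕ → Bool) × ℝ≥0∞ → ℝ) (ω : ℕ → Bool) : Prop :=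
  ∀ x y : ℝ≥0∞, x ≠ ⊤ → y ≠ ⊤ → Tendsto (fun n => birkhoffAverage ℝ (skewMap a b) φ n (ω, x) -
    birkhoffAverage ℝ (skewMap a b) φ n (ω, y)) atTop (𝓝 0)

section Base

variable {a b : ℝ} {ν : Measure (ℕ → Bool)} {κ : Measure ((ℕ → Bool) × ℝ≥0∞)}
  {φ : (ℕ → Bool) × ℝ≥0∞ → ℝ}

/-- The upper half of Birkhoff's theorem. The event that the upper limit is at least `q` has
measure `0` or `1` by ergodicity of the base, and the maximal ergodic theorem on the skew product
excludes the second case. -/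
theorem ae_eventually_lt [IsProbabilityMeasure κ] (hν : Ergodic shiftMap ν)
    (hκ : MeasurePreserving (skewMap a b) κ κ) (hfst : κ.map Prod.fst = ν)
    (htop : ∀ᵐ z ∂κ, z.2 ≠ ⊤) (hφ : Measurable φ) {C : ℝ} (hC : ∀ z, ‖φ z‖ ≤ C)
    (hind : ∀ᵐ ω ∂ν, FibreIndep a b φ ω) {q : ℝ} (hq : ∫ z, φ z ∂κ < q) :
    ∀ᵐ ω ∂ν, ∀ x : ℝ≥0∞, x ≠ ⊤ →
      ∀ᶠ n in atTop, birkhoffAverage ℝ (skewMap a b) φ n (ω, x) < q := by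
  have hφi : Integrable φ κ := .of_bound hφ.aestronglyMeasurable C (ae_of_all _ hC)
  have hbdd : Bornology.IsBounded (Set.range φ) :=
    isBounded_iff_forall_norm_le.2 ⟨C, by rintro _ ⟨z, rfl⟩; exact hC z⟩
  set A : Set (ℕ → Bool) :=
    {ω | LimsupGE q fun n => birkhoffAverage ℝ (skewMap a b) φ n (ω, 0)} with hA
  have hAm : MeasurableSet A := measurableSet_limsupGE q fun n =>
    (measurable_birkhoffAverage hκ.measurable hφ n).comp measurable_prodMk_right
  -- moving from `(σ ω, 0)` to `τ (ω, 0)` is harmless by independence of the height, and from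
  -- there to `(ω, 0)` because the averages along an orbit telescope
  have hinv : shiftMap ⁻¹' A =ᵐ[ν] A := by
    filter_upwards [hν.quasiMeasurePreserving.ae hind] with ω hω
    have h1 := hω 0 (Tmap a b (ω 0) 0) ENNReal.zero_ne_top (Tmap_ne_top a b _ ENNReal.zero_ne_top)
    have h2 := tendsto_birkhoffAverage_apply_sub_birkhoffAverage' ℝ hbdd (skewMap a b) (ω, 0)
    have h3 : Tendsto (fun n => birkhoffAverage ℝ (skewMap a b) φ n (shiftMap ω, 0) -
        birkhoffAverage ℝ (skewMap a b) φ n (ω, 0)) atTop (𝓝 0) := by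
      simpa [skewMap] using h1.add h2
    refine propext ⟨fun h => LimsupGE.of_tendsto_sub h h3, fun h => LimsupGE.of_tendsto_sub h ?_⟩
    simpa using h3.neg
  rcases hν.quasiErgodic.ae_mem_or_ae_notMem₀ hAm.nullMeasurableSet hinv with hall | hnone
  · exfalso
    obtain ⟨r, hr1, hr2⟩ := exists_rat_btwn hq
    have hν' : ∀ᵐ ω ∂(κ.map Prod.fst), ω ∈ A ∧ FibreIndep a b φ ω := by
      rw [hfst]; exact hall.and hind
    have hpos : ∀ᵐ z ∂κ, ∃ n, 0 < birkhoffSum (skewMap a b) (fun z => φ z - r) n z := by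
      filter_upwards [ae_of_ae_map measurable_fst.aemeasurable hν', htop] with z hz hz2
      have hz' : LimsupGE q fun n => birkhoffAverage ℝ (skewMap a b) φ n z :=
        LimsupGE.of_tendsto_sub hz.1 (hz.2 0 z.2 ENNReal.zero_ne_top hz2)
      obtain ⟨n, hn, hn0⟩ := ((hz' r hr2).and_eventually (eventually_gt_atTop 0)).exists
      refine ⟨n, ?_⟩
      have hn0' : (0 : ℝ) < n := by exact_mod_cast hn0
      simp only [birkhoffAverage, birkhoffSum, smul_eq_mul] at hn
      rw [inv_mul_eq_div, lt_div_iff₀ hn0'] at hn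
      simp only [birkhoffSum, Finset.sum_sub_distrib, Finset.sum_const, Finset.card_range,
        nsmul_eq_mul]
      linarith
    have := integral_nonneg_of_birkhoffSum_pos hκ (hφ.sub_const _)
      (hφi.sub (integrable_const _)) hpos
    rw [integral_sub hφi (integrable_const _)] at this
    simp at this
    linarith
  · filter_upwards [hnone, hind] with ω hω hω2 x hx
    have hx' : ¬ LimsupGE q fun n => birkhoffAverage ℝ (skewMap a b) φ n (ω, x) := fun h =>
      hω (h.of_tendsto_sub (hω2 x 0 hx ENNReal.zero_ne_top))
    simp only [LimsupGE, not_forall, not_frequently, not_lt] at hx'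
    obtain ⟨r, hr, h⟩ := hx'
    exact h.mono fun n hn => hn.trans_lt hr

/-- Birkhoff's theorem for functions on the skew product whose averages do not see the finite
height at which an orbit starts; only the base has to be ergodic. -/
theorem ae_tendsto_birkhoffAverage [IsProbabilityMeasure κ] (hν : Ergodic shiftMap ν)
    (hκ : MeasurePreserving (skewMap a b) κ κ) (hfst : κ.map Prod.fst = ν)
    (htop : ∀ᵐ z ∂κ, z.2 ≠ ⊤) (hφ : Measurable φ) {C : ℝ} (hC : ∀ z, ‖φ z‖ ≤ C)
    (hind : ∀ᵐ ω ∂ν, FibreIndep a b φ ω) :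
    ∀ᵐ ω ∂ν, ∀ x : ℝ≥0∞, x ≠ ⊤ →
      Tendsto (fun n => birkhoffAverage ℝ (skewMap a b) φ n (ω, x)) atTop
        (𝓝 (∫ z, φ z ∂κ)) := by
  have hup : ∀ ψ : (ℕ → Bool) × ℝ≥0∞ → ℝ, Measurable ψ → (∀ z, ‖ψ z‖ ≤ C) →
      (∀ᵐ ω ∂ν, FibreIndep a b ψ ω) → ∀ᵐ ω ∂ν, ∀ q : ℚ, ∫ z, ψ z ∂κ < q → ∀ x : ℝ≥0∞, x ≠ ⊤ →
        ∀ᶠ n in atTop, birkhoffAverage ℝ (skewMap a b) ψ n (ω, x) < q := by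
    intro ψ h1 h2 h3
    refine ae_all_iff.2 fun q => ?_
    by_cases hq : ∫ z, ψ z ∂κ < q
    · filter_upwards [ae_eventually_lt hν hκ hfst htop h1 h2 h3 hq] with ω hω _
      exact hω
    · exact ae_of_all _ fun ω h => absurd h hq
  have hneg : ∀ᵐ ω ∂ν, FibreIndep a b (-φ) ω := by
    filter_upwards [hind] with ω hω x y hx hy
    simpa [birkhoffAverage_neg, sub_eq_add_neg, add_comm] using (hω x y hx hy).neg
  filter_upwards [hup φ hφ hC hind, hup (-φ) hφ.neg (by simpa using hC) hneg] with ω h1 h2 x hx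
  refine tendsto_order.2 ⟨fun l hl => ?_, fun u hu => ?_⟩
  · obtain ⟨q, hq1, hq2⟩ := exists_rat_btwn (neg_lt_neg hl)
    have := h2 q (by simpa [integral_neg] using hq1) x hx
    filter_upwards [this] with n hn
    simp only [birkhoffAverage_neg, Pi.neg_apply] at hn
    linarith
  · obtain ⟨q, hq1, hq2⟩ := exists_rat_btwn hu
    exact (h1 q hq1 x hx).mono fun n hn => hn.trans hq2

end Base

/-! ### Contraction in the fibres -/

/-- The logarithm of the slope of the fibre map over `z`. -/
noncomputable def logSlope (a b : ℝ) (z : (ℕ → Bool) × ℝ≥0∞) : ℝ :=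
  if z.1 0 then Real.log b else Real.log a

/-- The product of the slopes of the first `n` fibre maps along `ω`. -/
noncomputable def slopeProd (a b : ℝ) (n : ℕ) (ω : ℕ → Bool) : ℝ≥0∞ :=
  ENNReal.ofReal (Real.exp (birkhoffSum (skewMap a b) (logSlope a b) n (ω, 0)))

lemma skewMap_iterate_fst (a b : ℝ) (n : ℕ) (z : (ℕ → Bool) × ℝ≥0∞) :
    ((skewMap a b)^[n] z).1 = shiftMap^[n] z.1 := by
  induction n generalizing z with
  | zero => rfl
  | succ n ih => rw [Function.iterate_succ_apply, ih, Function.iterate_succ_apply]; rfl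

/-- Stated with `≤` and an additive error, so that it makes sense in `[0,∞]` without
subtraction. -/
lemma iterate_snd_le {a b : ℝ} (ha : 0 < a) (hb : 0 < b) (ω : ℕ → Bool) (x y : ℝ≥0∞) (n : ℕ) :
    ((skewMap a b)^[n] (ω, y)).2 ≤ ((skewMap a b)^[n] (ω, x)).2 + slopeProd a b n ω * y := by
  induction n with
  | zero => simp [slopeProd]
  | succ n ih =>
    have hs : slopeProd a b (n + 1) ω =
        (if (shiftMap^[n] ω) 0 then ENNReal.ofReal b else ENNReal.ofReal a) *
          slopeProd a b n ω := by
      rw [slopeProd, birkhoffSum_succ, Real.exp_add, mul_comm,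
        ENNReal.ofReal_mul (Real.exp_pos _).le, slopeProd]
      congr 1
      rw [logSlope, skewMap_iterate_fst]
      split_ifs
      · rw [Real.exp_log hb]
      · rw [Real.exp_log ha]
    simp only [Function.iterate_succ_apply']
    rw [hs]
    simp only [skewMap, Tmap, skewMap_iterate_fst]
    generalize (shiftMap^[n] ω) 0 = i
    cases i
    · simp only [Bool.false_eq_true, if_false]
      calc _ ≤ _ := mul_le_mul_right ih _
        _ = _ := by ring
    · simp only [if_true]
      calc _ ≤ _ := add_le_add_left (mul_le_mul_right ih _) _
        _ = _ := by ring

/-- Asymptotic equality of the orbits in the compact space `Σ × [0,∞]`: along any ultrafilter both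
heights converge, and the contraction estimate forces the limits to coincide. -/
lemma tendsto_sub_of_slopeProd {a b : ℝ} (ha : 0 < a) (hb : 0 < b) {ω : ℕ → Bool}
    (hω : Tendsto (fun n => slopeProd a b n ω) atTop (𝓝 0))
    {φ : (ℕ → Bool) × ℝ≥0∞ → ℝ} (hφ : Continuous φ) {x y : ℝ≥0∞} (hx : x ≠ ⊤) (hy : y ≠ ⊤) :
    Tendsto (fun n => φ ((skewMap a b)^[n] (ω, x)) - φ ((skewMap a b)^[n] (ω, y))) atTop
      (𝓝 0) := by
  refine (tendsto_iff_ultrafilter _ _ _).2 fun g hg => ?_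
  have hlim : ∀ x : ℝ≥0∞, ∃ p, Tendsto (fun n => (skewMap a b)^[n] (ω, x)) g (𝓝 p) := fun x =>
    ⟨_, (g.map fun n => (skewMap a b)^[n] (ω, x)).le_nhds_lim⟩
  have herr : ∀ x : ℝ≥0∞, x ≠ ⊤ → Tendsto (fun n => slopeProd a b n ω * x) g (𝓝 0) := by
    intro x hx
    simpa using (ENNReal.Tendsto.mul_const hω (Or.inr hx)).mono_left hg
  obtain ⟨p, hp⟩ := hlim x
  obtain ⟨p', hp'⟩ := hlim y
  have hle : ∀ {x y : ℝ≥0∞} {p p' : (ℕ → Bool) × ℝ≥0∞}, y ≠ ⊤ →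
      Tendsto (fun n => (skewMap a b)^[n] (ω, x)) g (𝓝 p) →
      Tendsto (fun n => (skewMap a b)^[n] (ω, y)) g (𝓝 p') → p'.2 ≤ p.2 := by
    intro x y p p' hy hp hp'
    have := le_of_tendsto_of_tendsto' ((continuous_snd.tendsto _).comp hp')
      (((continuous_snd.tendsto _).comp hp).add (herr y hy))
      (fun n => iterate_snd_le ha hb ω x y n)
    simpa using this
  have hpp : p = p' := by
    refine Prod.ext ?_ (le_antisymm (hle hx hp' hp) (hle hy hp hp'))
    have h1 := (continuous_fst.tendsto _).comp hp
    have h2 := (continuous_fst.tendsto _).comp hp'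
    refine tendsto_nhds_unique h1 (h2.congr fun n => ?_)
    simp [skewMap_iterate_fst]
  subst hpp
  simpa using ((hφ.tendsto _).comp hp).sub ((hφ.tendsto _).comp hp')

lemma tendsto_birkhoffAverage_sub {a b : ℝ} (ha : 0 < a) (hb : 0 < b) {ω : ℕ → Bool}
    (hω : Tendsto (fun n => slopeProd a b n ω) atTop (𝓝 0))
    {φ : (ℕ → Bool) × ℝ≥0∞ → ℝ} (hφ : Continuous φ) : FibreIndep a b φ ω := by
  intro x y hx hy
  have := (tendsto_sub_of_slopeProd ha hb hω hφ hx hy).cesaro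
  refine this.congr fun n => ?_
  simp only [birkhoffAverage, birkhoffSum, Finset.sum_sub_distrib, mul_sub, smul_eq_mul]

lemma integral_logSlope (a b : ℝ) {ν : Measure (ℕ → Bool)} [IsProbabilityMeasure ν]
    {κ : Measure ((ℕ → Bool) × ℝ≥0∞)} (hfst : κ.map Prod.fst = ν) :
    ∫ z, logSlope a b z ∂κ = lyap a b ν := by
  have hm : Measurable fun ω : ℕ → Bool => ω 0 := measurable_pi_apply 0
  have h1 : ∫ z, logSlope a b z ∂κ =
      ∫ i, (if i then Real.log b else Real.log a) ∂(ν.map fun ω => ω 0) := by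
    rw [← hfst, Measure.map_map hm measurable_fst,
      integral_map (hm.comp measurable_fst).aemeasurable
        (measurable_of_countable _).aestronglyMeasurable]
    rfl
  have : IsProbabilityMeasure (ν.map fun ω => ω 0) :=
    Measure.isProbabilityMeasure_map hm.aemeasurable
  rw [h1, integral_fintype .of_finite]
  simp only [Fintype.sum_bool, measureReal_def, Measure.map_apply hm (MeasurableSet.singleton _),
    lyap, smul_eq_mul, if_true, Bool.false_eq_true, if_false]
  rw [add_comm]
  rfl

theorem ae_tendsto_slopeProd {a b : ℝ} {ν : Measure (ℕ → Bool)} [IsProbabilityMeasure ν]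
    {κ : Measure ((ℕ → Bool) × ℝ≥0∞)} [IsProbabilityMeasure κ] (hν : Ergodic shiftMap ν)
    (hlyap : lyap a b ν < 0)
    (hκ : MeasurePreserving (skewMap a b) κ κ) (hfst : κ.map Prod.fst = ν)
    (htop : ∀ᵐ z ∂κ, z.2 ≠ ⊤) :
    ∀ᵐ ω ∂ν, Tendsto (fun n => slopeProd a b n ω) atTop (𝓝 0) := by
  have hmeas : Measurable (logSlope a b) :=
    (measurable_of_countable fun i : Bool => if i then Real.log b else Real.log a).comp
      ((measurable_pi_apply 0).comp measurable_fst)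
  have hbd : ∀ z, ‖logSlope a b z‖ ≤ max ‖Real.log a‖ ‖Real.log b‖ := by
    intro z
    unfold logSlope
    split_ifs
    · exact le_max_right _ _
    · exact le_max_left _ _
  have hind : ∀ ω, FibreIndep a b (logSlope a b) ω := by
    intro ω x y _ _
    simp [birkhoffAverage, birkhoffSum, logSlope, skewMap_iterate_fst]
  filter_upwards [ae_tendsto_birkhoffAverage hν hκ hfst htop hmeas hbd (ae_of_all _ hind)]
    with ω hω
  have h := hω 0 ENNReal.zero_ne_top
  rw [integral_logSlope a b hfst] at h
  have h2 : Tendsto (fun n => birkhoffSum (skewMap a b) (logSlope a b) n (ω, 0)) atTop atBot := by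
    refine (tendsto_natCast_atTop_atTop.atTop_mul_neg hlyap h).congr' ?_
    filter_upwards [eventually_gt_atTop 0] with n hn
    have : (n : ℝ) ≠ 0 := by positivity
    simp [birkhoffAverage, this]
  simpa [slopeProd] using ENNReal.tendsto_ofReal (Real.tendsto_exp_atBot.comp h2)

/-! ### Convergence of the empirical measures -/

/-- The exceptional null set is chosen from a countable dense family in `C(Σ × [0,∞], ℝ)`, hence
before `φ`. -/
theorem ae_forall_continuous_tendsto {a b : ℝ} (ha : 0 < a) (hb : 0 < b)
    {ν : Measure (ℕ → Bool)} [IsProbabilityMeasure ν]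
    {κ : Measure ((ℕ → Bool) × ℝ≥0∞)} [IsProbabilityMeasure κ] (hν : Ergodic shiftMap ν)
    (hlyap : lyap a b ν < 0)
    (hκ : MeasurePreserving (skewMap a b) κ κ) (hfst : κ.map Prod.fst = ν)
    (htop : ∀ᵐ z ∂κ, z.2 ≠ ⊤) :
    ∀ᵐ ω ∂ν, ∀ x : ℝ≥0∞, x ≠ ⊤ → ∀ φ : (ℕ → Bool) × ℝ≥0∞ → ℝ, Continuous φ →
      Tendsto (fun n => birkhoffAverage ℝ (skewMap a b) φ n (ω, x)) atTop
        (𝓝 (∫ z, φ z ∂κ)) := by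
  let d := TopologicalSpace.denseSeq C((ℕ → Bool) × ℝ≥0∞, ℝ)
  have hd : ∀ᵐ ω ∂ν, ∀ k, ∀ x : ℝ≥0∞, x ≠ ⊤ →
      Tendsto (fun n => birkhoffAverage ℝ (skewMap a b) (d k) n (ω, x)) atTop
        (𝓝 (∫ z, d k z ∂κ)) := by
    refine ae_all_iff.2 fun k => ?_
    refine ae_tendsto_birkhoffAverage hν hκ hfst htop (d k).continuous.measurable
      (d k).norm_coe_le_norm ?_
    filter_upwards [ae_tendsto_slopeProd hν hlyap hκ hfst htop] with ω hω
    exact tendsto_birkhoffAverage_sub ha hb hω (d k).continuous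
  filter_upwards [hd] with ω hω x hx φ hφ
  refine Metric.tendsto_atTop.2 fun ε hε => ?_
  obtain ⟨k, hk⟩ := (TopologicalSpace.denseRange_denseSeq
    C((ℕ → Bool) × ℝ≥0∞, ℝ)).exists_dist_lt ⟨φ, hφ⟩ (show 0 < ε / 3 by positivity)
  have hpt : ∀ z, |φ z - d k z| ≤ ε / 3 := fun z =>
    (ContinuousMap.dist_apply_le_dist (f := ⟨φ, hφ⟩) (g := d k) z).trans hk.le
  have hint : ∀ ψ : (ℕ → Bool) × ℝ≥0∞ → ℝ, Continuous ψ → Integrable ψ κ := fun ψ hψ =>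
    .of_bound hψ.measurable.aestronglyMeasurable _
      (ae_of_all _ (ContinuousMap.norm_coe_le_norm ⟨ψ, hψ⟩))
  have hI : |∫ z, φ z ∂κ - ∫ z, d k z ∂κ| ≤ ε / 3 := by
    rw [← integral_sub (hint _ hφ) (hint _ (d k).continuous)]
    simpa using norm_integral_le_of_norm_le_const (μ := κ) (f := fun z => φ z - d k z)
      (ae_of_all κ hpt)
  have hS : ∀ n, |birkhoffAverage ℝ (skewMap a b) φ n (ω, x) -
      birkhoffAverage ℝ (skewMap a b) (d k) n (ω, x)| ≤ ε / 3 := by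
    intro n
    simp only [birkhoffAverage, birkhoffSum, smul_eq_mul, ← mul_sub, ← Finset.sum_sub_distrib]
    rw [abs_mul, abs_of_nonneg (by positivity : (0 : ℝ) ≤ (n : ℝ)⁻¹)]
    have h := (Finset.abs_sum_le_sum_abs
      (fun i => φ ((skewMap a b)^[i] (ω, x)) - d k ((skewMap a b)^[i] (ω, x)))
      (Finset.range n)).trans (Finset.sum_le_card_nsmul _ _ (ε / 3) fun i _ => hpt _)
    rw [Finset.card_range, nsmul_eq_mul] at h
    rcases Nat.eq_zero_or_pos n with rfl | hn
    · simp; positivity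
    · rwa [inv_mul_le_iff₀ (by exact_mod_cast hn)]
  obtain ⟨N, hN⟩ := Metric.tendsto_atTop.1 (hω k x hx) (ε / 3) (by positivity)
  refine ⟨N, fun n hn => ?_⟩
  have h1 := abs_lt.1 (by simpa [Real.dist_eq] using hN n hn)
  have h2 := abs_le.1 (hS n)
  have h3 := abs_le.1 hI
  rw [Real.dist_eq, abs_lt]
  constructor <;> linarith [h1.1, h1.2, h2.1, h2.2, h3.1, h3.2]

/-- **Theorem 3.4 (convergence of empirical measures).** Let `ν` be ergodic
`σ`-invariant with `λ(ν) < 0` and let `μ` be the unique measure invariant for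
`(T₀, T₁, ν)`. Then there is a unique `τ`-invariant probability measure `κ` on
`Σ × ℝ̄₊` with marginals `ν` and `μ`, and for `ν`-a.e. `ω̄` and every `x ∈ ℝ₊`
the empirical measures `(1/n)·Σ_{k<n} δ_{τ^k(ω̄,x)}` converge weak-* to `κ`. -/
theorem empirical_convergence (a b : ℝ) (ha : 0 < a) (ha1 : a < 1) (hb : 1 < b)
    (ν : Measure (ℕ → Bool)) [IsProbabilityMeasure ν] (hν : Ergodic shiftMap ν)
    (hlyap : lyap a b ν < 0)
    (μ : Measure ℝ≥0∞) (hμ : IsInvariantFor a b ν μ) :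
    ∃ κ : Measure ((ℕ → Bool) × ℝ≥0∞),
      (IsProbabilityMeasure κ ∧ MeasurePreserving (skewMap a b) κ κ ∧
        κ.map Prod.fst = ν ∧ κ.map Prod.snd = μ) ∧
      (∀ κ' : Measure ((ℕ → Bool) × ℝ≥0∞),
        IsProbabilityMeasure κ' → MeasurePreserving (skewMap a b) κ' κ' →
        κ'.map Prod.fst = ν → κ'.map Prod.snd = μ → κ' = κ) ∧
      (∀ᵐ ωb ∂ν, ∀ x : ℝ≥0∞, x ≠ ⊤ →
        ∀ φ : (ℕ → Bool) × ℝ≥0∞ → ℝ, Continuous φ →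
          Tendsto (fun n : ℕ => (1 / (n : ℝ)) *
              ∑ k ∈ Finset.range n, φ ((skewMap a b)^[k] (ωb, x)))
            atTop (nhds (∫ z, φ z ∂κ))) := by
  have hb0 : 0 < b := by linarith
  obtain ⟨-, hμtop, κ, hκp, hκ, hfst, hsnd⟩ := hμ
  have htop : ∀ κ' : Measure ((ℕ → Bool) × ℝ≥0∞), κ'.map Prod.snd = μ → ∀ᵐ z ∂κ', z.2 ≠ ⊤ := by
    intro κ' h
    refine ae_of_ae_map measurable_snd.aemeasurable (p := fun x => x ≠ ⊤) ?_
    rw [h, ae_iff]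
    simpa using hμtop
  have hconv := ae_forall_continuous_tendsto ha hb0 hν hlyap hκ hfst (htop κ hsnd)
  refine ⟨κ, ⟨hκp, hκ, hfst, hsnd⟩, fun κ' hκp' hκ' hfst' hsnd' => ?_, ?_⟩
  · have hconv' := ae_forall_continuous_tendsto ha hb0 hν hlyap hκ' hfst' (htop κ' hsnd')
    -- the averages along a single orbit determine both measures
    obtain ⟨ω, h, h'⟩ := (hconv.and hconv').exists
    exact ext_of_forall_integral_eq_of_IsFiniteMeasure fun f =>
      tendsto_nhds_unique (h' 0 ENNReal.zero_ne_top f f.continuous)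
        (h 0 ENNReal.zero_ne_top f f.continuous)
  · filter_upwards [hconv] with ω hω x hx φ hφ
    simpa [birkhoffAverage, birkhoffSum] using hω x hx φ hφ
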